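/- For every n ≥ 1 and any random vectors θ₀, …, θ_{n−1} in ℝ^d defined on a common probability space, their average θ̄_n = (1/n)·Σ_{i=0}^{n−1} θ_i satisfies E‖θ̄_n − θ*‖²_H ≤ (2σ²/(1−η̃)²)·E‖(1/n)·Σ_{i=0}^{n−1} ∇f(θ_i)‖²_{H⁻¹} + (800/(1−η̃)²)·(ln(2/(1−η)))²·E[((1/n)·Σ_{i=0}^{n−1} ⟨∇f(θ_i), θ_i − θ*⟩)²], where both sides may be infinite. -/

import Mathlib

/-!
Write `vᵢ = θᵢ - θ*`. The residual `⟨x, θ* - θ⟩ + ε` is a centered Gaussian of variance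
`s² = σ² + ‖θ - θ*‖²_H` independent of `b`, so `f(θ) = E|s g + b|` with `g` standard normal. The
derivative of this in `s` is `√(2/π) E exp(-b²/(2s²))`, whence `∇f(θ) = α(σ_θ) H (θ - θ*)`.

The function `α` is nearly constant near `0`: `|α(0) - α(z)| ≤ (2 log(2/(1-η))/σ) z α(z)`. One side
follows from monotonicity of `E exp(-b²/(2v))` in `v`; the other from Jensen's inequality, which
bounds `E exp(-b²/(2σ²))` below by `(E exp(-b²/(2(σ²+z²))))^(1+z²/σ²)`, together with
`E exp(-b²/(2v)) ≥ P(b = 0) ≥ 1 - η`.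

Finally, for convex weights `wᵢ`, `α(0) ∑ wᵢ vᵢ = ∑ wᵢ α(σᵢ) vᵢ + ∑ wᵢ (α(0) - α(σᵢ)) vᵢ`. The first
sum has `H`-norm equal to the `H⁻¹`-norm of the averaged gradient. By the comparison of `α(0)` and
`α(σᵢ)`, the second has `H`-norm at most a constant times
`∑ wᵢ α(σᵢ) ‖vᵢ‖²_H = ∑ wᵢ ⟨∇f(θᵢ), vᵢ⟩`. Since `α(0)² = (2/π)(1-η̃)²/σ²`, squaring with suitable
weights and integrating gives the claim.
-/

open MeasureTheory ProbabilityTheory Real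
open scoped RealInnerProductSpace ENNReal

noncomputable section

/-- Euclidean space `ℝ^d`. -/
abbrev Vec (d : ℕ) := EuclideanSpace ℝ (Fin d)

/-- The expected `ℓ¹` loss `f(θ) = E |y - ⟨x, θ⟩|` where `y = ⟨x, θ*⟩ + ε + b`. -/
noncomputable def fLoss {d : ℕ} {Ω : Type} [MeasurableSpace Ω] (P : Measure Ω)
    (x : Ω → Vec d) (ε b : Ω → ℝ) (θs θ : Vec d) : ℝ :=
  ∫ ω, |⟪x ω, θs⟫ + ε ω + b ω - ⟪x ω, θ⟫| ∂P

/-- `σ_θ = ‖θ - θ*‖_H = √⟨θ - θ*, H (θ - θ*)⟩`. -/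
noncomputable def sigTh {d : ℕ} (H : Matrix (Fin d) (Fin d) ℝ) (θs θ : Vec d) : ℝ :=
  Real.sqrt ⟪θ - θs, Matrix.toEuclideanLin H (θ - θs)⟫

/-- The effective outlier proportion `η̃ = 1 - E[exp (-b² / (2σ²))]`. -/
noncomputable def etaT {Ω : Type} [MeasurableSpace Ω] (P : Measure Ω) (b : Ω → ℝ)
    (σ : ℝ) : ℝ :=
  1 - ∫ ω, Real.exp (-(b ω) ^ 2 / (2 * σ ^ 2)) ∂P

/-- `α(z) = √(2/π) · (σ² + z²)^(-1/2) · E[exp (-b² / (2 (σ² + z²)))]`. -/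
noncomputable def alphaF {Ω : Type} [MeasurableSpace Ω] (P : Measure Ω) (b : Ω → ℝ)
    (σ z : ℝ) : ℝ :=
  Real.sqrt (2 / π) * (Real.sqrt (σ ^ 2 + z ^ 2))⁻¹ *
    ∫ ω, Real.exp (-(b ω) ^ 2 / (2 * (σ ^ 2 + z ^ 2))) ∂P

/-- The Gauss error function. -/
noncomputable def erf (t : ℝ) : ℝ :=
  2 / Real.sqrt π * ∫ u in (0:ℝ)..t, Real.exp (-u ^ 2)

open scoped NNReal

section InlierMass

variable {ν : Measure ℝ} {v w : ℝ}

/-- The Gaussian-weighted mass `E[exp (-β² / (2v))]` of `β ∼ ν`, where `ν` is the law of the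
outliers and `v` the total noise variance: `1 - η̃` is its value at `v = σ²`, and it is the last
factor of `α(z)` at `v = σ² + z²`. The value at `v = 0` is the junk value `ν univ`. -/
def inlierMass (ν : Measure ℝ) (v : ℝ) : ℝ := ∫ β, exp (-β ^ 2 / (2 * v)) ∂ν

lemma integrable_exp_neg_sq_div [IsFiniteMeasure ν] (hv : 0 ≤ v) :
    Integrable (fun β : ℝ => exp (-β ^ 2 / (2 * v))) ν := by
  refine Integrable.of_bound (by fun_prop) 1 (ae_of_all _ fun β => ?_)
  rw [norm_of_nonneg (exp_pos _).le, exp_le_one_iff, neg_div]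
  exact neg_nonpos.2 (by positivity)

lemma inlierMass_nonneg : 0 ≤ inlierMass ν v :=
  integral_nonneg fun _ => (exp_pos _).le

lemma inlierMass_mono [IsFiniteMeasure ν] (hv : 0 < v) (hvw : v ≤ w) :
    inlierMass ν v ≤ inlierMass ν w := by
  refine integral_mono (integrable_exp_neg_sq_div hv.le)
    (integrable_exp_neg_sq_div (hv.le.trans hvw)) fun β => exp_le_exp.2 ?_
  rw [neg_div, neg_div, neg_le_neg_iff]
  gcongr

lemma measureReal_singleton_zero_le_inlierMass [IsFiniteMeasure ν] (hv : 0 ≤ v) :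
    ν.real {0} ≤ inlierMass ν v := by
  rw [← integral_indicator_one (measurableSet_singleton 0)]
  refine integral_mono ((integrable_const 1).indicator (measurableSet_singleton 0))
    (integrable_exp_neg_sq_div hv) fun β => ?_
  rcases eq_or_ne β 0 with rfl | hβ
  · simp
  · simpa [hβ] using (exp_pos _).le

-- Jensen's inequality for `u ↦ u ^ (w / v)`, which maps `exp (-β² / (2w))` to `exp (-β² / (2v))`.
lemma inlierMass_rpow_le [IsProbabilityMeasure ν] (hv : 0 < v) (hvw : v ≤ w) :
    inlierMass ν w ^ (w / v) ≤ inlierMass ν v := by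
  have hw : 0 < w := hv.trans_le hvw
  have hpow (β : ℝ) : exp (-β ^ 2 / (2 * w)) ^ (w / v) = exp (-β ^ 2 / (2 * v)) := by
    rw [← exp_mul]
    congr 1
    field_simp
  have hjensen := (convexOn_rpow ((one_le_div hv).2 hvw)).map_integral_le (μ := ν)
    (f := fun β => exp (-β ^ 2 / (2 * w)))
    (continuousOn_id.rpow_const fun _ _ => Or.inr (by positivity)) isClosed_Ici
    (ae_of_all _ fun β => (exp_pos _).le) (integrable_exp_neg_sq_div hw.le)
    (by simpa only [Function.comp_def, hpow] using integrable_exp_neg_sq_div hv.le)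
  simpa only [hpow, inlierMass] using hjensen

lemma rpow_mul_inlierMass_le [IsProbabilityMeasure ν] (hv : 0 < v) (hvw : v ≤ w) :
    ν.real {0} ^ (w / v - 1) * inlierMass ν w ≤ inlierMass ν v := by
  have hw : 0 < w := hv.trans_le hvw
  have hexp : 0 ≤ w / v - 1 := sub_nonneg.2 ((one_le_div hv).2 hvw)
  calc ν.real {0} ^ (w / v - 1) * inlierMass ν w
      ≤ inlierMass ν w ^ (w / v - 1) * inlierMass ν w :=
        mul_le_mul_of_nonneg_right (rpow_le_rpow measureReal_nonneg
          (measureReal_singleton_zero_le_inlierMass hw.le) hexp) inlierMass_nonneg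
    _ = inlierMass ν w ^ (w / v) := by
        rw [← rpow_add_one' inlierMass_nonneg (by rw [sub_add_cancel]; positivity), sub_add_cancel]
    _ ≤ inlierMass ν v := inlierMass_rpow_le hv hvw

end InlierMass

section LogBounds

-- `1 - exp (-u) ≤ min 1 u` with `u = -t² log p`, and `min 1 t² ≤ t`.
lemma one_sub_rpow_sq_le {p t : ℝ} (hp0 : 0 < p) (hp1 : p ≤ 1) (ht : 0 ≤ t) :
    1 - p ^ (t ^ 2) ≤ (1 - log p) * t := by
  have hlog : log p ≤ 0 := log_nonpos hp0.le hp1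
  rcases le_total 1 t with h1t | ht1
  · have hpow : 0 ≤ p ^ (t ^ 2) := by positivity
    nlinarith
  · have hexp : log p * t ^ 2 + 1 ≤ p ^ (t ^ 2) := by
      rw [rpow_def_of_pos hp0]
      exact add_one_le_exp _
    nlinarith [mul_nonneg (neg_nonneg.2 hlog) (mul_nonneg ht (sub_nonneg.2 ht1))]

lemma one_sub_log_le {p q : ℝ} (hq0 : 0 < q) (hqp : q ≤ p) (hp1 : p ≤ 1) :
    1 - log p ≤ 2 * log (2 / q) := by
  have hlogq : log q ≤ log p := log_le_log hq0 hqp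
  have hlogp : log p ≤ 0 := log_nonpos (hq0.le.trans hqp) hp1
  rw [log_div two_ne_zero hq0.ne']
  linarith [log_two_gt_d9]

end LogBounds

section Alpha

variable {Ω : Type} [MeasurableSpace Ω] {P : Measure Ω} {b : Ω → ℝ} {σ z : ℝ}

lemma alphaF_eq (hb : AEMeasurable b P) (σ z : ℝ) :
    alphaF P b σ z = √(2 / π) * (√(σ ^ 2 + z ^ 2))⁻¹ * inlierMass (P.map b) (σ ^ 2 + z ^ 2) := by
  rw [alphaF, inlierMass, integral_map hb (by fun_prop)]

lemma one_sub_etaT (hb : AEMeasurable b P) (σ : ℝ) :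
    1 - etaT P b σ = inlierMass (P.map b) (σ ^ 2) := by
  rw [etaT, sub_sub_cancel, inlierMass, integral_map hb (by fun_prop)]

lemma alphaF_nonneg : 0 ≤ alphaF P b σ z :=
  mul_nonneg (by positivity) (integral_nonneg fun _ => (exp_pos _).le)

lemma alphaF_zero_sq (hσ : 0 ≤ σ) :
    alphaF P b σ 0 ^ 2 = 2 / π * (1 - etaT P b σ) ^ 2 / σ ^ 2 := by
  have hα : alphaF P b σ 0 = √(2 / π) * σ⁻¹ * (1 - etaT P b σ) := by
    simp [alphaF, etaT, sqrt_sq hσ]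
  rw [hα, mul_pow, mul_pow, sq_sqrt (by positivity)]
  ring

lemma alphaF_zero_le [IsProbabilityMeasure P] (hb : AEMeasurable b P) (hσ : 0 < σ) (hz : 0 ≤ z) :
    alphaF P b σ 0 ≤ (1 + z / σ) * alphaF P b σ z := by
  have := Measure.isProbabilityMeasure_map hb
  have hscale : σ⁻¹ ≤ (1 + z / σ) * (√(σ ^ 2 + z ^ 2))⁻¹ := by
    rw [← div_eq_mul_inv, le_div_iff₀ (by positivity), inv_mul_le_iff₀ hσ,
      sqrt_le_left (by positivity)]
    field_simp
    nlinarith [mul_nonneg hσ.le hz]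
  have hmass := inlierMass_mono (ν := P.map b) (pow_pos hσ 2)
    (le_add_of_nonneg_right (sq_nonneg z))
  calc alphaF P b σ 0 = √(2 / π) * σ⁻¹ * inlierMass (P.map b) (σ ^ 2) := by
        rw [alphaF_eq hb, zero_pow two_ne_zero, add_zero, sqrt_sq hσ.le]
    _ ≤ √(2 / π) * ((1 + z / σ) * (√(σ ^ 2 + z ^ 2))⁻¹)
          * inlierMass (P.map b) (σ ^ 2 + z ^ 2) := by
        gcongr
        exact inlierMass_nonneg
    _ = (1 + z / σ) * alphaF P b σ z := by rw [alphaF_eq hb]; ring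

lemma rpow_mul_alphaF_le [IsProbabilityMeasure P] (hb : AEMeasurable b P) (hσ : 0 < σ) (z : ℝ) :
    (P.map b).real {0} ^ ((z / σ) ^ 2) * alphaF P b σ z ≤ alphaF P b σ 0 := by
  have := Measure.isProbabilityMeasure_map hb
  have hscale : (√(σ ^ 2 + z ^ 2))⁻¹ ≤ σ⁻¹ :=
    inv_anti₀ hσ (le_sqrt_of_sq_le (le_add_of_nonneg_right (sq_nonneg z)))
  have hexp : (z / σ) ^ 2 = (σ ^ 2 + z ^ 2) / σ ^ 2 - 1 := by
    field_simp
    ring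
  have hmass := rpow_mul_inlierMass_le (ν := P.map b) (pow_pos hσ 2)
    (le_add_of_nonneg_right (sq_nonneg z))
  calc (P.map b).real {0} ^ ((z / σ) ^ 2) * alphaF P b σ z
      = √(2 / π) * (√(σ ^ 2 + z ^ 2))⁻¹ * ((P.map b).real {0} ^ ((σ ^ 2 + z ^ 2) / σ ^ 2 - 1)
          * inlierMass (P.map b) (σ ^ 2 + z ^ 2)) := by
        rw [alphaF_eq hb, hexp]
        ring
    _ ≤ √(2 / π) * σ⁻¹ * inlierMass (P.map b) (σ ^ 2) := by
        have := inlierMass_nonneg (ν := P.map b) (v := σ ^ 2 + z ^ 2)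
        gcongr
    _ = alphaF P b σ 0 := by
        rw [alphaF_eq hb, zero_pow two_ne_zero, add_zero, sqrt_sq hσ.le]

lemma abs_alphaF_zero_sub_le [IsProbabilityMeasure P] (hb : AEMeasurable b P) (hσ : 0 < σ)
    (hz : 0 ≤ z) (hp : 0 < (P.map b).real {0}) :
    |alphaF P b σ 0 - alphaF P b σ z|
      ≤ (1 - log ((P.map b).real {0})) / σ * z * alphaF P b σ z := by
  have := Measure.isProbabilityMeasure_map hb
  set p := (P.map b).real {0}
  have hlog : log p ≤ 0 := log_nonpos hp.le measureReal_le_one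
  have hupper := alphaF_zero_le hb hσ hz
  have hlower := rpow_mul_alphaF_le hb hσ z
  have hα : 0 ≤ alphaF P b σ z := alphaF_nonneg
  have hpow := mul_le_mul_of_nonneg_right
    (one_sub_rpow_sq_le hp measureReal_le_one (by positivity : 0 ≤ z / σ)) hα
  have hlogα : log p * (z / σ * alphaF P b σ z) ≤ 0 :=
    mul_nonpos_of_nonpos_of_nonneg hlog (by positivity)
  rw [div_mul_eq_mul_div, mul_div_assoc, abs_le]
  constructor <;> linarith

end Alpha

section Gaussian

lemma hasDerivAt_gaussianPDFReal (m : ℝ) {v : ℝ≥0} (hv : v ≠ 0) (x : ℝ) :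
    HasDerivAt (gaussianPDFReal m v) (-((x - m) / v) * gaussianPDFReal m v x) x := by
  have hv' : (v : ℝ) ≠ 0 := NNReal.coe_ne_zero.2 hv
  have hexponent : HasDerivAt (fun x => -(x - m) ^ 2 / (2 * v)) (-((x - m) / v)) x := by
    convert! ((((hasDerivAt_id' x).sub_const m).pow 2).neg).div_const (2 * (v : ℝ)) using 1
    push_cast
    field_simp
  rw [gaussianPDFReal_def]
  convert! hexponent.exp.const_mul (√(2 * π * v))⁻¹ using 1
  ring

lemma integrable_gaussianPDFReal_mul_sub (m : ℝ) {v : ℝ≥0} (hv : v ≠ 0) :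
    Integrable (fun x => gaussianPDFReal m v x * (x - m)) := by
  have hid : Integrable (fun x : ℝ => x - m) (gaussianReal m v) :=
    ((memLp_id_gaussianReal' 1 ENNReal.one_ne_top).integrable le_rfl).sub (integrable_const m)
  rw [gaussianReal_of_var_ne_zero m hv, integrable_withDensity_iff_integrable_smul'
    (measurable_gaussianPDF m v) (ae_of_all _ fun _ => gaussianPDF_lt_top)] at hid
  simpa only [toReal_gaussianPDF, smul_eq_mul] using hid

-- `-v` times the Gaussian density is an antiderivative of `x - m` times the density.
lemma setIntegral_Ioi_sub_gaussianReal (m : ℝ) {v : ℝ≥0} (hv : v ≠ 0) (a : ℝ) :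
    ∫ x in Set.Ioi a, (x - m) ∂(gaussianReal m v) = v * gaussianPDFReal m v a := by
  have hderiv (x : ℝ) : HasDerivAt (fun x => -v * gaussianPDFReal m v x)
      (gaussianPDFReal m v x * (x - m)) x := by
    convert! (hasDerivAt_gaussianPDFReal m hv x).const_mul (-v : ℝ) using 1
    have : (v : ℝ) ≠ 0 := NNReal.coe_ne_zero.2 hv
    field_simp
  have hint := (integrable_gaussianPDFReal_mul_sub m hv).integrableOn (s := Set.Ioi a)
  have hlim := tendsto_zero_of_hasDerivAt_of_integrableOn_Ioi (fun x _ => hderiv x) hint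
    ((integrable_gaussianPDFReal m v).const_mul _).integrableOn
  rw [← integral_indicator measurableSet_Ioi, integral_gaussianReal_eq_integral_smul hv]
  simp_rw [← Set.indicator_smul_apply, smul_eq_mul]
  rw [integral_indicator measurableSet_Ioi,
    integral_Ioi_of_hasDerivAt_of_tendsto' (fun x _ => hderiv x) hint hlim]
  ring

-- `sign (s g + β) = 2 · 1_{g > -β / s} - 1` almost surely, and `g` has mean zero.
lemma integral_sign_mul_gaussianReal {s : ℝ} (hs : 0 < s) (β : ℝ) :
    ∫ g, (SignType.sign (s * g + β) : ℝ) * g ∂(gaussianReal 0 1)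
      = √(2 / π) * exp (-β ^ 2 / (2 * s ^ 2)) := by
  have := nullSingletonClass_gaussianReal (μ := 0) one_ne_zero
  have hid : Integrable (fun g : ℝ => g) (gaussianReal 0 1) :=
    (memLp_id_gaussianReal' 1 ENNReal.one_ne_top).integrable le_rfl
  have hsign : ∀ᵐ g ∂(gaussianReal 0 1), (SignType.sign (s * g + β) : ℝ) * g
      = 2 * (Set.Ioi (-β / s)).indicator (fun g => g) g - g := by
    filter_upwards [Measure.ae_ne (gaussianReal 0 1) (-β / s)] with g hg
    rcases hg.lt_or_gt with hlt | hgt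
    · have : s * g + β < 0 := by linarith [(lt_div_iff₀' hs).1 hlt]
      simp [sign_neg this, hlt.le]
    · have : 0 < s * g + β := by linarith [(div_lt_iff₀' hs).1 hgt]
      simp [sign_pos this, hgt]
      ring
  have htail := setIntegral_Ioi_sub_gaussianReal 0 one_ne_zero (-β / s)
  simp only [sub_zero, NNReal.coe_one, one_mul] at htail
  rw [integral_congr_ae hsign, integral_sub ((hid.indicator measurableSet_Ioi).const_mul 2) hid,
    integral_const_mul, integral_indicator measurableSet_Ioi, htail, integral_id_gaussianReal,
    gaussianPDFReal_def]
  have hexponent : -(-β / s - 0) ^ 2 / (2 * ((1 : ℝ≥0) : ℝ)) = -β ^ 2 / (2 * s ^ 2) := by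
    rw [NNReal.coe_one, sub_zero, div_pow, neg_sq, ← neg_div, div_div, mul_one, mul_comm 2]
  have hconst : √(2 / π) = 2 * (√(2 * π * (1 : ℝ≥0)))⁻¹ := by
    rw [sqrt_eq_iff_mul_self_eq (by positivity) (by positivity), mul_mul_mul_comm, ← mul_inv,
      mul_self_sqrt (by positivity)]
    simp only [NNReal.coe_one]
    field_simp
  dsimp only
  rw [hexponent, hconst]
  ring

end Gaussian

section GaussLoss

lemma measurable_sign_cast : Measurable (fun u : ℝ => (SignType.sign u : ℝ)) := by
  simp only [sign_apply, apply_ite (SignType.cast : SignType → ℝ)]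
  exact .ite measurableSet_Ioi measurable_const
    (.ite measurableSet_Iio measurable_const measurable_const)

lemma hasDerivAt_integral_abs_mul_add {α : Type*} [MeasurableSpace α] {μ : Measure α}
    {X Y : α → ℝ} (hX : Integrable X μ) (hY : Integrable Y μ) {s : ℝ}
    (hne : ∀ᵐ a ∂μ, s * X a + Y a ≠ 0) :
    Integrable (fun a => (SignType.sign (s * X a + Y a) : ℝ) * X a) μ ∧
      HasDerivAt (fun r => ∫ a, |r * X a + Y a| ∂μ)
        (∫ a, (SignType.sign (s * X a + Y a) : ℝ) * X a ∂μ) s := by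
  have hmeas (r : ℝ) : AEMeasurable (fun a => r * X a + Y a) μ :=
    (hX.aemeasurable.const_mul r).add hY.aemeasurable
  refine hasDerivAt_integral_of_dominated_loc_of_lip (bound := X) Filter.univ_mem
    (Filter.Eventually.of_forall fun r => (hmeas r).abs.aestronglyMeasurable)
    ((hX.const_mul s).add hY).abs
    ((measurable_sign_cast.comp_aemeasurable (hmeas s)).mul hX.aemeasurable).aestronglyMeasurable
    (ae_of_all _ fun a => LipschitzOnWith.of_dist_le_mul fun u _ r _ => ?_) hX ?_
  · calc |(|u * X a + Y a| - |r * X a + Y a|)| ≤ |(u * X a + Y a) - (r * X a + Y a)| :=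
          abs_abs_sub_abs_le_abs_sub _ _
      _ = |X a| * |u - r| := by rw [add_sub_add_right_eq_sub, ← sub_mul, abs_mul, mul_comm]
  · filter_upwards [hne] with a ha
    have hlin : HasDerivAt (fun r => r * X a + Y a) (X a) s := by
      simpa using ((hasDerivAt_id s).mul_const (X a)).add_const (Y a)
    exact (hasDerivAt_abs ha).comp s hlin

lemma ae_prod_mul_add_ne_zero {ρ ν : Measure ℝ} [SFinite ρ] [NullSingletonClass ρ] [SFinite ν]
    {s : ℝ} (hs : s ≠ 0) : ∀ᵐ p ∂(ρ.prod ν), s * p.1 + p.2 ≠ 0 := by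
  have hmeas : MeasurableSet {p : ℝ × ℝ | s * p.1 + p.2 ≠ 0} :=
    (measurableSet_eq_fun (by fun_prop) measurable_const).compl
  rw [Measure.ae_prod_iff_ae_ae hmeas, Measure.ae_ae_comm hmeas]
  refine ae_of_all _ fun β => ?_
  filter_upwards [Measure.ae_ne ρ (-β / s)] with g hg hzero
  exact hg (by field_simp; linarith)

/-- The expected absolute value `E|W + β|` of a centered Gaussian `W` of variance `v` corrupted by
an independent `β ∼ ν`. A negative `v` is read as `0`. -/
def gaussLoss (ν : Measure ℝ) (v : ℝ) : ℝ :=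
  ∫ p : ℝ × ℝ, |p.1 + p.2| ∂((gaussianReal 0 v.toNNReal).prod ν)

variable {ν : Measure ℝ}

lemma gaussLoss_eq_integral_sqrt_mul_add [SFinite ν] (v : ℝ) :
    gaussLoss ν v = ∫ p : ℝ × ℝ, |√v * p.1 + p.2| ∂((gaussianReal 0 1).prod ν) := by
  have hscale : gaussianReal 0 v.toNNReal = (gaussianReal 0 1).map (√v * ·) := by
    rw [gaussianReal_map_const_mul, mul_zero, mul_one]
    congr 1
    ext
    simp [Real.sq_sqrt']
  have hprod : (gaussianReal 0 v.toNNReal).prod ν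
      = ((gaussianReal 0 1).prod ν).map (Prod.map (√v * ·) id) := by
    rw [← Measure.map_prod_map _ _ (by fun_prop) measurable_id, Measure.map_id, hscale]
  rw [gaussLoss, hprod, integral_map (by fun_prop) (by fun_prop)]
  rfl

lemma hasDerivAt_gaussLoss [IsFiniteMeasure ν] (hν : Integrable (fun β => β) ν) {v : ℝ}
    (hv : 0 < v) :
    HasDerivAt (gaussLoss ν) (√(2 / π) * inlierMass ν v * (2 * √v)⁻¹) v := by
  have := nullSingletonClass_gaussianReal (μ := 0) one_ne_zero
  have hid : Integrable (fun g : ℝ => g) (gaussianReal 0 1) :=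
    (memLp_id_gaussianReal' 1 ENNReal.one_ne_top).integrable le_rfl
  have hs : 0 < √v := sqrt_pos.2 hv
  obtain ⟨hint, hderiv⟩ := hasDerivAt_integral_abs_mul_add (hid.comp_fst ν)
    (hν.comp_snd (gaussianReal 0 1)) (ae_prod_mul_add_ne_zero hs.ne')
  have hvalue : ∫ p : ℝ × ℝ, (SignType.sign (√v * p.1 + p.2) : ℝ) * p.1
      ∂((gaussianReal 0 1).prod ν) = √(2 / π) * inlierMass ν v := by
    rw [integral_prod_symm _ hint]
    simp only [integral_sign_mul_gaussianReal hs, sq_sqrt hv.le, integral_const_mul, inlierMass]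
  rw [hvalue] at hderiv
  rw [funext gaussLoss_eq_integral_sqrt_mul_add]
  simpa only [one_div, Function.comp_def] using hderiv.comp v (hasDerivAt_sqrt hv.ne')

end GaussLoss

section Gradient

variable {E : Type*} [NormedAddCommGroup E] [InnerProductSpace ℝ E] [CompleteSpace E]

lemma hasGradientAt_comp_of_hasDerivAt {f : E → ℝ} {f' x : E} {g : ℝ → ℝ} {g' : ℝ}
    (hg : HasDerivAt g g' (f x)) (hf : HasGradientAt f f' x) :
    HasGradientAt (fun y => g (f y)) (g' • f') x := by
  rw [hasGradientAt_iff_hasFDerivAt] at hf ⊢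
  rw [map_smul]
  exact hg.comp_hasFDerivAt x hf

lemma hasGradientAt_inner_self_sub {T : E →L[ℝ] E} (hT : (T : E →ₗ[ℝ] E).IsSymmetric) (c x : E) :
    HasGradientAt (fun y => ⟪y - c, T (y - c)⟫) ((2 : ℝ) • T (x - c)) x := by
  rw [hasGradientAt_iff_hasFDerivAt]
  have hsub : HasFDerivAt (fun y => y - c) (ContinuousLinearMap.id ℝ E) x :=
    (hasFDerivAt_id x).sub_const c
  refine (hsub.inner ℝ (T.hasFDerivAt.comp x hsub)).congr_fderiv ?_
  ext v
  have hsymm : ⟪x - c, T v⟫ = ⟪T (x - c), v⟫ := (hT (x - c) v).symm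
  simp [-map_sub, fderivInnerCLM_apply, hsymm, real_inner_comm v, two_mul]

lemma measurable_gradient [MeasurableSpace E] [BorelSpace E] (f : E → ℝ) :
    Measurable (gradient f) :=
  (InnerProductSpace.toDual ℝ E).symm.continuous.measurable.comp (measurable_fderiv ℝ f)

end Gradient

section QuadraticForm

lemma inner_toEuclideanLin_self_nonneg {ι : Type*} [Fintype ι] [DecidableEq ι] {H : Matrix ι ι ℝ}
    (hH : H.PosSemidef) (v : EuclideanSpace ℝ ι) : 0 ≤ ⟪v, Matrix.toEuclideanLin H v⟫ :=
  (Matrix.isPositive_toEuclideanLin_iff.2 hH).re_inner_nonneg_right v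

open scoped MatrixOrder in
lemma exists_inner_toEuclideanLin_eq {ι : Type*} [Fintype ι] [DecidableEq ι] {H : Matrix ι ι ℝ}
    (hH : H.PosSemidef) : ∃ N : EuclideanSpace ℝ ι →ₗ[ℝ] EuclideanSpace ℝ ι,
      ∀ v w, ⟪v, Matrix.toEuclideanLin H w⟫ = ⟪N v, N w⟫ := by
  obtain ⟨B, rfl⟩ := CStarAlgebra.nonneg_iff_eq_star_mul_self.1 hH.nonneg
  refine ⟨Matrix.toEuclideanLin B, fun v w => ?_⟩
  rw [← LinearMap.adjoint_inner_right, ← Matrix.toEuclideanLin_conjTranspose_eq_adjoint,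
    ← Matrix.star_eq_conjTranspose]
  simp [Matrix.toLpLin_apply, Matrix.mulVec_mulVec]

lemma toEuclideanLin_inv_toEuclideanLin {ι : Type*} [Fintype ι] [DecidableEq ι]
    {H : Matrix ι ι ℝ} (hH : IsUnit H.det) (v : EuclideanSpace ℝ ι) :
    Matrix.toEuclideanLin H⁻¹ (Matrix.toEuclideanLin H v) = v := by
  simp [Matrix.toLpLin_apply, Matrix.mulVec_mulVec, Matrix.nonsing_inv_mul _ hH]

-- `a₀ ∑ wᵢ uᵢ = ∑ wᵢ aᵢ uᵢ + ∑ wᵢ (a₀ - aᵢ) uᵢ`.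
lemma norm_smul_sum_smul_le {ι F : Type*} [SeminormedAddCommGroup F] [NormedSpace ℝ F]
    {s : Finset ι} {w a : ι → ℝ} {u : ι → F} {a₀ K : ℝ} (hw : ∀ i ∈ s, 0 ≤ w i)
    (ha : ∀ i ∈ s, |a₀ - a i| ≤ K * ‖u i‖ * a i) :
    ‖a₀ • ∑ i ∈ s, w i • u i‖
      ≤ ‖∑ i ∈ s, w i • a i • u i‖ + K * ∑ i ∈ s, w i * (a i * ‖u i‖ ^ 2) := by
  have hsplit : a₀ • ∑ i ∈ s, w i • u i
      = ∑ i ∈ s, w i • a i • u i + ∑ i ∈ s, w i • (a₀ - a i) • u i := by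
    rw [Finset.smul_sum, ← Finset.sum_add_distrib]
    refine Finset.sum_congr rfl fun i _ => ?_
    rw [← smul_add, ← add_smul, add_sub_cancel, smul_comm]
  have hdev : ‖∑ i ∈ s, w i • (a₀ - a i) • u i‖ ≤ K * ∑ i ∈ s, w i * (a i * ‖u i‖ ^ 2) := by
    rw [Finset.mul_sum]
    refine norm_sum_le_of_le s fun i hi => ?_
    calc ‖w i • (a₀ - a i) • u i‖ = w i * (|a₀ - a i| * ‖u i‖) := by
          rw [norm_smul, norm_smul, norm_of_nonneg (hw i hi), norm_eq_abs]
      _ ≤ w i * (K * ‖u i‖ * a i * ‖u i‖) := by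
          have := hw i hi
          gcongr
          exact ha i hi
      _ = K * (w i * (a i * ‖u i‖ ^ 2)) := by ring
  rw [hsplit]
  exact (norm_add_le _ _).trans (by gcongr)

lemma sq_mul_inner_sum_smul_le {ι κ : Type*} [Fintype κ] [DecidableEq κ] {H : Matrix κ κ ℝ}
    (hH : H.PosDef) {s : Finset ι} {w a : ι → ℝ} {u g : ι → EuclideanSpace ℝ κ} {a₀ K : ℝ}
    (hw : ∀ i ∈ s, 0 ≤ w i) (hg : ∀ i ∈ s, g i = a i • Matrix.toEuclideanLin H (u i))
    (ha : ∀ i ∈ s, |a₀ - a i| ≤ K * √⟪u i, Matrix.toEuclideanLin H (u i)⟫ * a i) :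
    a₀ ^ 2 * ⟪∑ i ∈ s, w i • u i, Matrix.toEuclideanLin H (∑ i ∈ s, w i • u i)⟫
      ≤ 5 / 4 * ⟪∑ i ∈ s, w i • g i, Matrix.toEuclideanLin H⁻¹ (∑ i ∈ s, w i • g i)⟫
        + 5 * K ^ 2 * (∑ i ∈ s, w i * ⟪g i, u i⟫) ^ 2 := by
  obtain ⟨N, hN⟩ := exists_inner_toEuclideanLin_eq hH.posSemidef
  have hgrad : ∑ i ∈ s, w i • g i
      = Matrix.toEuclideanLin H (∑ i ∈ s, w i • a i • u i) := by
    rw [map_sum]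
    exact Finset.sum_congr rfl fun i hi => by rw [hg i hi, map_smul, map_smul]
  have hdual : ∑ i ∈ s, w i * ⟪g i, u i⟫ = ∑ i ∈ s, w i * (a i * ‖N (u i)‖ ^ 2) :=
    Finset.sum_congr rfl fun i hi => by
      rw [hg i hi, real_inner_smul_left, real_inner_comm, hN, real_inner_self_eq_norm_sq]
  have hnorm := norm_smul_sum_smul_le (u := fun i => N (u i)) hw fun i hi => by
    simpa only [hN, real_inner_self_eq_norm_sq, sqrt_sq (norm_nonneg _)] using ha i hi
  rw [hgrad, toEuclideanLin_inv_toEuclideanLin ((Matrix.isUnit_iff_isUnit_det _).1 hH.isUnit),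
    real_inner_comm (∑ i ∈ s, w i • a i • u i), hdual, hN, hN, real_inner_self_eq_norm_sq,
    real_inner_self_eq_norm_sq]
  simp only [map_sum, map_smul]
  set p := ‖∑ i ∈ s, w i • a i • N (u i)‖
  set q := ∑ i ∈ s, w i * (a i * ‖N (u i)‖ ^ 2)
  calc a₀ ^ 2 * ‖∑ i ∈ s, w i • N (u i)‖ ^ 2 = ‖a₀ • ∑ i ∈ s, w i • N (u i)‖ ^ 2 := by
        rw [norm_smul, mul_pow, norm_eq_abs, sq_abs]
    _ ≤ (p + K * q) ^ 2 := by gcongr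
    -- The weight `5 / 4` survives the later factor `π / 2` coming from `1 / α(0)²`: `5π / 8 ≤ 2`.
    _ ≤ 5 / 4 * p ^ 2 + 5 * K ^ 2 * q ^ 2 := by nlinarith [sq_nonneg (p / 2 - 2 * (K * q))]

end QuadraticForm

section Loss

variable {d : ℕ} {Ω : Type} [MeasurableSpace Ω] {P : Measure Ω} [IsProbabilityMeasure P]
  {θs : Vec d} {H : Matrix (Fin d) (Fin d) ℝ} {σ : ℝ} {x : Ω → Vec d} {ε b : Ω → ℝ}

lemma sigTh_sq (hH : H.PosSemidef) (θs θ : Vec d) :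
    sigTh H θs θ ^ 2 = ⟪θ - θs, Matrix.toEuclideanLin H (θ - θs)⟫ :=
  sq_sqrt (inner_toEuclideanLin_self_nonneg hH _)

-- The residual is `W + b`, where `W = ⟨θ* - θ, x⟩ + ε` is a centered Gaussian independent of `b`.
lemma fLoss_eq_gaussLoss (hH : H.PosSemidef)
    (hx : ∀ v, HasLaw (fun ω => ⟪v, x ω⟫)
      (gaussianReal 0 (toNNReal ⟪v, Matrix.toEuclideanLin H v⟫)) P)
    (hε : HasLaw ε (gaussianReal 0 (toNNReal (σ ^ 2))) P) (hb : AEMeasurable b P)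
    (hxε : IndepFun x ε P) (hxεb : IndepFun (fun ω => (x ω, ε ω)) b P) (θ : Vec d) :
    fLoss P x ε b θs θ
      = gaussLoss (P.map b) (σ ^ 2 + ⟪θ - θs, Matrix.toEuclideanLin H (θ - θs)⟫) := by
  have := Measure.isProbabilityMeasure_map hb
  have hinner : Measurable fun y : Vec d => ⟪θs - θ, y⟫ := by fun_prop
  have hquad : ⟪θs - θ, Matrix.toEuclideanLin H (θs - θ)⟫
      = ⟪θ - θs, Matrix.toEuclideanLin H (θ - θs)⟫ := by
    rw [← neg_sub θ θs, map_neg, inner_neg_neg]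
  have hW : HasLaw (fun ω => ⟪θs - θ, x ω⟫ + ε ω) (gaussianReal 0
      (toNNReal (σ ^ 2 + ⟪θ - θs, Matrix.toEuclideanLin H (θ - θs)⟫))) P := by
    have hsum := (hxε.comp hinner measurable_id).hasLaw_fun_add (hx (θs - θ)) hε
    rwa [gaussianReal_conv_gaussianReal, add_zero, hquad, add_comm (toNNReal _),
      ← toNNReal_add (sq_nonneg σ) (inner_toEuclideanLin_self_nonneg hH _)] at hsum
  have hWb : IndepFun (fun ω => ⟪θs - θ, x ω⟫ + ε ω) b P :=
    hxεb.comp ((hinner.comp measurable_fst).add measurable_snd) measurable_id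
  rw [gaussLoss, ← (hWb.hasLaw_prod hW ⟨hb, rfl⟩).integral_comp (by fun_prop)]
  refine integral_congr_ae (ae_of_all _ fun ω => ?_)
  simp only [Function.comp_apply, inner_sub_left, real_inner_comm (x ω)]
  ring_nf

lemma hasGradientAt_fLoss (hH : H.PosSemidef) (hσ : 0 < σ)
    (hx : ∀ v, HasLaw (fun ω => ⟪v, x ω⟫)
      (gaussianReal 0 (toNNReal ⟪v, Matrix.toEuclideanLin H v⟫)) P)
    (hε : HasLaw ε (gaussianReal 0 (toNNReal (σ ^ 2))) P) (hb : Integrable b P)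
    (hxε : IndepFun x ε P) (hxεb : IndepFun (fun ω => (x ω, ε ω)) b P) (θ : Vec d) :
    HasGradientAt (fun θ => fLoss P x ε b θs θ)
      (alphaF P b σ (sigTh H θs θ) • Matrix.toEuclideanLin H (θ - θs)) θ := by
  have := Measure.isProbabilityMeasure_map hb.aemeasurable
  have hν : Integrable (fun β => β) (P.map b) :=
    (integrable_map_measure (by fun_prop) hb.aemeasurable).2 hb
  have hvar : 0 < σ ^ 2 + ⟪θ - θs, Matrix.toEuclideanLin H (θ - θs)⟫ :=
    add_pos_of_pos_of_nonneg (pow_pos hσ 2) (inner_toEuclideanLin_self_nonneg hH _)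
  have hquad : HasGradientAt (fun θ => ⟪θ - θs, Matrix.toEuclideanLin H (θ - θs)⟫)
      ((2 : ℝ) • Matrix.toEuclideanLin H (θ - θs)) θ :=
    hasGradientAt_inner_self_sub (T := (Matrix.toEuclideanLin H).toContinuousLinearMap)
      (Matrix.isPositive_toEuclideanLin_iff.2 hH).isSymmetric θs θ
  rw [funext fun θ => fLoss_eq_gaussLoss (θs := θs) hH hx hε hb.aemeasurable hxε hxεb θ]
  convert! hasGradientAt_comp_of_hasDerivAt
    (f := fun θ => ⟪θ - θs, Matrix.toEuclideanLin H (θ - θs)⟫)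
    ((hasDerivAt_gaussLoss hν hvar).comp_const_add _ _) hquad using 1
  rw [alphaF_eq hb.aemeasurable, sigTh_sq hH, smul_smul]
  congr 1
  field_simp

end Loss

section Lintegral

lemma lintegral_ofReal_le_mul_add_mul {α : Type*} [MeasurableSpace α] {μ : Measure α}
    {F G D : α → ℝ} {c₁ c₂ : ℝ} (hc₁ : 0 ≤ c₁) (hc₂ : 0 ≤ c₂) (hG : AEMeasurable G μ)
    (h : ∀ᵐ a ∂μ, F a ≤ c₁ * G a + c₂ * D a) :
    ∫⁻ a, ENNReal.ofReal (F a) ∂μ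
      ≤ ENNReal.ofReal c₁ * ∫⁻ a, ENNReal.ofReal (G a) ∂μ
        + ENNReal.ofReal c₂ * ∫⁻ a, ENNReal.ofReal (D a) ∂μ := by
  rw [← lintegral_const_mul' _ _ ENNReal.ofReal_ne_top,
    ← lintegral_const_mul' _ _ ENNReal.ofReal_ne_top,
    ← lintegral_add_left' (hG.ennreal_ofReal.const_mul _)]
  refine lintegral_mono_ae (h.mono fun a ha => ?_)
  rw [← ENNReal.ofReal_mul hc₁, ← ENNReal.ofReal_mul hc₂]
  exact (ENNReal.ofReal_le_ofReal ha).trans ENNReal.ofReal_add_le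

end Lintegral

section Bound

variable {d : ℕ} {Ω : Type} [MeasurableSpace Ω] {P : Measure Ω} [IsProbabilityMeasure P]
  {θs : Vec d} {H : Matrix (Fin d) (Fin d) ℝ} {σ η : ℝ} {b : Ω → ℝ}

lemma measureReal_map_singleton_zero (hb : AEMeasurable b P) :
    (P.map b).real {0} = 1 - P.real {ω | b ω ≠ 0} := by
  have hset : {ω | b ω ≠ 0} = (b ⁻¹' {0})ᶜ := rfl
  rw [hset, probReal_compl_eq_one_sub₀ (hb.nullMeasurableSet_preimage (measurableSet_singleton 0)),
    sub_sub_cancel, map_measureReal_apply_of_aemeasurable hb (measurableSet_singleton 0)]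

lemma abs_alphaF_zero_sub_le_log (hb : AEMeasurable b P) (hσ : 0 < σ)
    (hη : P.real {ω | b ω ≠ 0} ≤ η) (hη1 : η < 1) {z : ℝ} (hz : 0 ≤ z) :
    |alphaF P b σ 0 - alphaF P b σ z| ≤ 2 * log (2 / (1 - η)) / σ * z * alphaF P b σ z := by
  have := Measure.isProbabilityMeasure_map hb
  have hη0 : 0 < 1 - η := sub_pos.2 hη1
  have hp : 1 - η ≤ (P.map b).real {0} := by
    rw [measureReal_map_singleton_zero hb]
    linarith
  have hlog := one_sub_log_le hη0 hp measureReal_le_one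
  have hα : 0 ≤ alphaF P b σ z := alphaF_nonneg
  exact (abs_alphaF_zero_sub_le hb hσ hz (hη0.trans_le hp)).trans (by gcongr)

lemma etaT_lt_one (hb : AEMeasurable b P) (hη : P.real {ω | b ω ≠ 0} < 1) : etaT P b σ < 1 := by
  have := Measure.isProbabilityMeasure_map hb
  have hmass := measureReal_singleton_zero_le_inlierMass (ν := P.map b) (sq_nonneg σ)
  rw [measureReal_map_singleton_zero hb, ← one_sub_etaT hb] at hmass
  linarith

lemma inner_sum_smul_sub_le (hH : H.PosDef) (hσ : 0 < σ) (hb : AEMeasurable b P)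
    (hη : P.real {ω | b ω ≠ 0} ≤ η) (hη1 : η < 1) {ι : Type*} {s : Finset ι} {w : ι → ℝ}
    (hw0 : ∀ i ∈ s, 0 ≤ w i) (hw1 : ∑ i ∈ s, w i = 1) {θ g : ι → Vec d}
    (hg : ∀ i ∈ s, g i
      = alphaF P b σ (sigTh H θs (θ i)) • Matrix.toEuclideanLin H (θ i - θs)) :
    ⟪∑ i ∈ s, w i • θ i - θs, Matrix.toEuclideanLin H (∑ i ∈ s, w i • θ i - θs)⟫
      ≤ 2 * σ ^ 2 / (1 - etaT P b σ) ^ 2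
          * ⟪∑ i ∈ s, w i • g i, Matrix.toEuclideanLin H⁻¹ (∑ i ∈ s, w i • g i)⟫
        + 800 / (1 - etaT P b σ) ^ 2 * log (2 / (1 - η)) ^ 2
          * (∑ i ∈ s, w i * ⟪g i, θ i - θs⟫) ^ 2 := by
  have hcenter : ∑ i ∈ s, w i • θ i - θs = ∑ i ∈ s, w i • (θ i - θs) := by
    simp only [smul_sub, Finset.sum_sub_distrib, ← Finset.sum_smul, hw1, one_smul]
  have hmain := sq_mul_inner_sum_smul_le (u := fun i => θ i - θs) hH hw0 hg fun i _ =>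
    abs_alphaF_zero_sub_le_log hb hσ hη hη1 (sqrt_nonneg _)
  rw [alphaF_zero_sq hσ.le, ← hcenter] at hmain
  have hdual := inner_toEuclideanLin_self_nonneg hH.inv.posSemidef (∑ i ∈ s, w i • g i)
  have hE : 0 < 1 - etaT P b σ := sub_pos.2 (etaT_lt_one hb (hη.trans_lt hη1))
  set E := 1 - etaT P b σ
  set L := log (2 / (1 - η))
  set Q := ⟪∑ i ∈ s, w i • θ i - θs, Matrix.toEuclideanLin H (∑ i ∈ s, w i • θ i - θs)⟫
  set G := ⟪∑ i ∈ s, w i • g i, Matrix.toEuclideanLin H⁻¹ (∑ i ∈ s, w i • g i)⟫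
  set D := ∑ i ∈ s, w i * ⟪g i, θ i - θs⟫
  calc Q = π / 2 * σ ^ 2 / E ^ 2 * (2 / π * E ^ 2 / σ ^ 2 * Q) := by field_simp
    _ ≤ π / 2 * σ ^ 2 / E ^ 2 * (5 / 4 * G + 5 * (2 * L / σ) ^ 2 * D ^ 2) := by gcongr
    _ = 5 / 8 * π * σ ^ 2 / E ^ 2 * G + 10 * π / E ^ 2 * L ^ 2 * D ^ 2 := by
        field_simp
        ring
    _ ≤ 2 * σ ^ 2 / E ^ 2 * G + 800 / E ^ 2 * L ^ 2 * D ^ 2 := by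
        gcongr <;> linarith [pi_lt_d2]

end Bound

theorem stmt4_general {d : ℕ}
    {Ω : Type} [MeasurableSpace Ω] {P : Measure Ω} [IsProbabilityMeasure P]
    {θs : Vec d} {H : Matrix (Fin d) (Fin d) ℝ} (hH : H.PosDef)
    {σ η : ℝ} (hσ : 0 < σ) (hη1 : η < 1) {x : Ω → Vec d} {ε b : Ω → ℝ}
    (hx : ∀ v, HasLaw (fun ω => ⟪v, x ω⟫)
      (gaussianReal 0 (toNNReal ⟪v, Matrix.toEuclideanLin H v⟫)) P)
    (hε : HasLaw ε (gaussianReal 0 (toNNReal (σ ^ 2))) P)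
    (hbη : P.real {ω | b ω ≠ 0} ≤ η) (hb : Integrable b P)
    (hxε : IndepFun x ε P) (hxεb : IndepFun (fun ω => (x ω, ε ω)) b P)
    {ι : Type*} {s : Finset ι} {w : ι → ℝ} (hw0 : ∀ i ∈ s, 0 ≤ w i) (hw1 : ∑ i ∈ s, w i = 1)
    {Ω₂ : Type*} [MeasurableSpace Ω₂] {P₂ : Measure Ω₂} {Θ : ι → Ω₂ → Vec d}
    (hΘ : ∀ i ∈ s, AEMeasurable (Θ i) P₂) :
    ∫⁻ ω, ENNReal.ofReal
        ⟪∑ i ∈ s, w i • Θ i ω - θs, Matrix.toEuclideanLin H (∑ i ∈ s, w i • Θ i ω - θs)⟫ ∂P₂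
      ≤ ENNReal.ofReal (2 * σ ^ 2 / (1 - etaT P b σ) ^ 2) *
          ∫⁻ ω, ENNReal.ofReal
            ⟪∑ i ∈ s, w i • gradient (fun θ => fLoss P x ε b θs θ) (Θ i ω),
              Matrix.toEuclideanLin H⁻¹
                (∑ i ∈ s, w i • gradient (fun θ => fLoss P x ε b θs θ) (Θ i ω))⟫ ∂P₂
        + ENNReal.ofReal (800 / (1 - etaT P b σ) ^ 2 * log (2 / (1 - η)) ^ 2) *
          ∫⁻ ω, ENNReal.ofReal ((∑ i ∈ s,
            w i * ⟪gradient (fun θ => fLoss P x ε b θs θ) (Θ i ω), Θ i ω - θs⟫) ^ 2) ∂P₂ := by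
  have hgrad : AEMeasurable
      (fun ω => ∑ i ∈ s, w i • gradient (fun θ => fLoss P x ε b θs θ) (Θ i ω)) P₂ :=
    Finset.aemeasurable_fun_sum s fun i hi =>
      ((measurable_gradient _).comp_aemeasurable (hΘ i hi)).const_smul (w i)
  have hdual : Measurable fun g : Vec d => ⟪g, Matrix.toEuclideanLin H⁻¹ g⟫ := by fun_prop
  exact lintegral_ofReal_le_mul_add_mul (by positivity) (by positivity)
    (hdual.comp_aemeasurable hgrad) <| ae_of_all _ fun ω =>
      inner_sum_smul_sub_le hH hσ hb.aemeasurable hbη hη1 hw0 hw1 fun i _ =>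
        (hasGradientAt_fLoss hH.posSemidef hσ hx hε hb hxε hxεb (Θ i ω)).gradient

theorem stmt4 {d : ℕ} (hd : 1 ≤ d)
    {Ω : Type} [MeasurableSpace Ω] (P : Measure Ω) [IsProbabilityMeasure P]
    (θs : Vec d) (H : Matrix (Fin d) (Fin d) ℝ) (hH : H.PosDef)
    (σ η : ℝ) (hσ : 0 < σ) (hη0 : 0 ≤ η) (hη1 : η < 1)
    (x : Ω → Vec d) (ε b : Ω → ℝ)
    (hxm : Measurable x) (hεm : Measurable ε) (hbm : Measurable b)
    (hxg : ∀ v : Vec d, Measure.map (fun ω => ⟪v, x ω⟫) P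
        = gaussianReal 0 (Real.toNNReal ⟪v, Matrix.toEuclideanLin H v⟫))
    (hεg : Measure.map ε P = gaussianReal 0 (Real.toNNReal (σ ^ 2)))
    (hbη : P {ω | b ω ≠ 0} = ENNReal.ofReal η)
    (hbi : Integrable b P)
    (hind1 : IndepFun x ε P)
    (hind2 : IndepFun (fun ω => (x ω, ε ω)) b P)
    (n : ℕ) (hn : 1 ≤ n)
    {Ω₂ : Type} [MeasurableSpace Ω₂] (P₂ : Measure Ω₂) [IsProbabilityMeasure P₂]
    (Θ : ℕ → Ω₂ → Vec d) (hΘ : ∀ i, Measurable (Θ i)):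
    ∫⁻ ω, ENNReal.ofReal
        ⟪(n : ℝ)⁻¹ • (∑ i ∈ Finset.range n, Θ i ω) - θs,
          Matrix.toEuclideanLin H ((n : ℝ)⁻¹ • (∑ i ∈ Finset.range n, Θ i ω) - θs)⟫ ∂P₂
      ≤ ENNReal.ofReal (2 * σ ^ 2 / (1 - etaT P b σ) ^ 2) *
          ∫⁻ ω, ENNReal.ofReal
            ⟪(n : ℝ)⁻¹ • ∑ i ∈ Finset.range n,
                gradient (fun θ => fLoss P x ε b θs θ) (Θ i ω),
              Matrix.toEuclideanLin H⁻¹ ((n : ℝ)⁻¹ • ∑ i ∈ Finset.range n,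
                gradient (fun θ => fLoss P x ε b θs θ) (Θ i ω))⟫ ∂P₂
        + ENNReal.ofReal (800 / (1 - etaT P b σ) ^ 2 * Real.log (2 / (1 - η)) ^ 2) *
          ∫⁻ ω, ENNReal.ofReal (((n : ℝ)⁻¹ * ∑ i ∈ Finset.range n,
              ⟪gradient (fun θ => fLoss P x ε b θs θ) (Θ i ω), Θ i ω - θs⟫) ^ 2) ∂P₂ := by
  simpa only [Finset.smul_sum, Finset.mul_sum] using
    stmt4_general (s := Finset.range n) (w := fun _ => (n : ℝ)⁻¹) hH hσ hη1
      (fun v => ⟨by fun_prop, hxg v⟩) ⟨hεm.aemeasurable, hεg⟩ (by simp [measureReal_def, hbη, hη0])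
      hbi hind1 hind2 (fun _ _ => by positivity) (by simp [Nat.one_le_iff_ne_zero.1 hn])
      fun i _ => (hΘ i).aemeasurable
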